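/- Suppose b < a (equivalently b < 1). Fix c ∈ ℝ, and for N = 2n let Fix_c be the number of fixed points of the random permutation obtained after K_N = ⌊(N/(2b))·(log N − c)⌋ steps of the bRT shuffle started at the identity. Then Fix_c converges in distribution as N → ∞ to a Poisson random variable with mean 1 + e^c/2; that is, for every k ∈ ℕ, ℙ(Fix_c = k) → e^{−(1 + e^c/2)}·(1 + e^c/2)^k / k!. -/

import Mathlib

open scoped BigOperators

noncomputable section

namespace BRT

/-- The transition matrix of the biased random transposition shuffle on `𝔖_N` determined
by the set `A ⊆ [N]` (with `B = Aᶜ`) and the bias parameters `a`, `b`: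
`P(x,y) = 2a²/N²` if `y x⁻¹` is a transposition of two elements of `A`, `2b²/N²` if it is a
transposition of two elements of `B`, `2ab/N²` if it transposes an element of `A` with one
of `B`, `(a²|A| + b²|B|)/N²` if `y = x`, and `0` otherwise. -/
def transMat (a b : ℝ) {N : ℕ} (A : Finset (Fin N)) :
    Matrix (Equiv.Perm (Fin N)) (Equiv.Perm (Fin N)) ℝ :=
  fun x y =>
    if y = x then (a ^ 2 * A.card + b ^ 2 * Aᶜ.card) / (N : ℝ) ^ 2
    else if ∃ i j : Fin N, i ≠ j ∧ i ∈ A ∧ j ∈ A ∧ y * x⁻¹ = Equiv.swap i j then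
      2 * a ^ 2 / (N : ℝ) ^ 2
    else if ∃ i j : Fin N, i ≠ j ∧ i ∉ A ∧ j ∉ A ∧ y * x⁻¹ = Equiv.swap i j then
      2 * b ^ 2 / (N : ℝ) ^ 2
    else if ∃ i j : Fin N, i ∈ A ∧ j ∉ A ∧ y * x⁻¹ = Equiv.swap i j then
      2 * a * b / (N : ℝ) ^ 2
    else 0

/-- Total variation distance between two probability mass functions on a finite type. -/
def dTV {α : Type*} [Fintype α] (p q : α → ℝ) : ℝ :=
  (∑ x, |p x - q x|) / 2

/-- The uniform distribution on permutations of `Fin N`. -/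
def unif (N : ℕ) : Equiv.Perm (Fin N) → ℝ :=
  fun _ => ((N.factorial : ℝ))⁻¹

/-!
One step of the shuffle draws two positions independently from a weight `p` and transposes them.
By the method of factorial moments it suffices that the `m`-th factorial moment of the number of
fixed points tends to `L ^ m`, where `L` is the limit of the expected number of fixed points, that
is, of the trace of the `K`-step transition matrix of one card.

The `m`-th factorial moment is the part contributed by injective tuples to the trace of the
`K`-step walk of `m`-tuples of cards. If `p ≤ η ^ 2`, then on injective tuples the one-step matrix
differs from the `m`-fold tensor power of the one-card walk by row sums of order `η ^ 4`. Let
non-injective tuples move by the tensor power, killed on reaching an injective tuple, and weight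
them by `η⁻¹`: the weighted row sums of the difference are then of order `η ^ 3`, so that the two
symmetric matrices agree up to a factor `1 + O(η ^ 3)` as quadratic forms. Since the trace of a
power is monotone on positive semidefinite matrices, the traces of the `K`-th powers agree up to
`(1 + O(η ^ 3)) ^ K`. This factor tends to `1` because `η ^ 2` has order `1 / n` and `K` has order
`n log n`. Non-injective tuples contribute little to either trace, as the return probabilities of
one card tend to zero uniformly.

The one-card walk is diagonalised explicitly, with eigenvalues `1`, `1 - a * b / n`, and `1 - a / n`
and `1 - b / n`, each of multiplicity `n - 1`. At the given time `K` its trace tends to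
`1 + exp c / 2`.
-/

section Spectral

open Matrix Finset
open scoped ComplexOrder

lemma norm_le_of_mulVec_eq_smul {ι 𝕜 : Type*} [Fintype ι] [NormedField 𝕜]
    {E : Matrix ι ι 𝕜} {h : ι → ℝ} {ε : ℝ} (hh : ∀ x, 0 < h x)
    (hE : ∀ x, ∑ y, ‖E x y‖ * h y ≤ ε * h x) {v : ι → 𝕜} (hv : v ≠ 0) {μ : 𝕜}
    (hμ : E *ᵥ v = μ • v) : ‖μ‖ ≤ ε := by
  obtain ⟨x₀, hx₀⟩ := Function.ne_iff.mp hv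
  obtain ⟨x, -, hmax⟩ := exists_max_image univ (fun x => ‖v x‖ / h x) ⟨x₀, mem_univ x₀⟩
  have hvx : 0 < ‖v x‖ / h x :=
    (div_pos (norm_pos_iff.mpr hx₀) (hh x₀)).trans_le (hmax x₀ (mem_univ x₀))
  have hbound : ‖μ‖ * ‖v x‖ ≤ ε * ‖v x‖ := by
    calc ‖μ‖ * ‖v x‖ = ‖∑ y, E x y * v y‖ := by
          rw [← norm_mul, ← smul_eq_mul, ← Pi.smul_apply, ← hμ, mulVec, dotProduct]
      _ ≤ ∑ y, ‖E x y‖ * ‖v y‖ := norm_sum_le_of_le _ fun y _ => (norm_mul _ _).le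
      _ ≤ ∑ y, ‖E x y‖ * (‖v x‖ / h x * h y) := by
          gcongr with y
          exact (div_le_iff₀ (hh y)).mp (hmax y (mem_univ y))
      _ = ‖v x‖ / h x * ∑ y, ‖E x y‖ * h y := by
          rw [mul_sum]
          exact sum_congr rfl fun y _ => by ring
      _ ≤ ‖v x‖ / h x * (ε * h x) := by gcongr; exact hE x
      _ = ε * ‖v x‖ := by
          have := (hh x).ne'
          field_simp
  exact le_of_mul_le_mul_right hbound ((div_pos_iff_of_pos_right (hh x)).mp hvx)

variable {ι 𝕜 : Type*} [Fintype ι] [DecidableEq ι] [RCLike 𝕜] {X Y : Matrix ι ι 𝕜}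

lemma trace_pow_eq_sum_eigenvalues_pow (hX : X.IsHermitian) (K : ℕ) :
    (X ^ K).trace = ∑ i, (hX.eigenvalues i : 𝕜) ^ K := by
  conv_lhs => rw [hX.spectral_theorem, ← map_pow, diagonal_pow, Unitary.conjStarAlgAut_apply,
    trace_mul_cycle, Unitary.coe_star_mul_self, one_mul, trace_diagonal]
  simp

lemma re_dotProduct_mulVec_eq_sum_eigenvalues (hX : X.IsHermitian) (u : EuclideanSpace 𝕜 ι) :
    RCLike.re (star u.ofLp ⬝ᵥ X *ᵥ u.ofLp) =
      ∑ j, ‖inner 𝕜 (hX.eigenvectorBasis j) u‖ ^ 2 * hX.eigenvalues j := by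
  have hsymm := isSymmetric_toEuclideanLin_iff.mpr hX
  have heigen (j : ι) : toEuclideanLin X (hX.eigenvectorBasis j) =
      (hX.eigenvalues j : 𝕜) • hX.eigenvectorBasis j := by
    ext i
    simp [toLpLin_apply, hX.mulVec_eigenvectorBasis, RCLike.real_smul_eq_coe_mul]
  have hcoord (j : ι) : inner 𝕜 (hX.eigenvectorBasis j) (toEuclideanLin X u) =
      (hX.eigenvalues j : 𝕜) * inner 𝕜 (hX.eigenvectorBasis j) u := by
    rw [← hsymm, heigen, inner_smul_left, RCLike.conj_ofReal]
  calc RCLike.re (star u.ofLp ⬝ᵥ X *ᵥ u.ofLp)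
      = RCLike.re (inner 𝕜 u (toEuclideanLin X u)) := by
        rw [EuclideanSpace.inner_eq_star_dotProduct, dotProduct_comm, toLpLin_apply]
    _ = _ := by
        rw [← hX.eigenvectorBasis.sum_inner_mul_inner, map_sum]
        refine sum_congr rfl fun j _ => ?_
        rw [hcoord, mul_left_comm, RCLike.re_ofReal_mul, inner_mul_symm_re_eq_norm, norm_mul,
          norm_inner_symm, ← sq, mul_comm]

lemma sum_eigenvalues_le_sum_eigenvalues {s : Set ℝ} {f : ℝ → ℝ} (hf : ConvexOn ℝ s f)
    (hmono : MonotoneOn f s) (hX : X.IsHermitian) (hY : Y.IsHermitian)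
    (hXY : (Y - X).PosSemidef) (hXs : ∀ i, hX.eigenvalues i ∈ s)
    (hYs : ∀ i, hY.eigenvalues i ∈ s) :
    ∑ i, f (hX.eigenvalues i) ≤ ∑ j, f (hY.eigenvalues j) := by
  let w (i j : ι) : ℝ := ‖inner 𝕜 (hY.eigenvectorBasis j) (hX.eigenvectorBasis i)‖ ^ 2
  have hw_nonneg (i j : ι) : 0 ≤ w i j := by positivity
  have hw_row (i : ι) : ∑ j, w i j = 1 := by
    simp [w, OrthonormalBasis.sum_sq_norm_inner_right]
  have hw_col (j : ι) : ∑ i, w i j = 1 := by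
    simp [w, OrthonormalBasis.sum_sq_norm_inner_left]
  have hle (i : ι) : hX.eigenvalues i ≤ ∑ j, w i j * hY.eigenvalues j := by
    have h := hXY.re_dotProduct_nonneg (hX.eigenvectorBasis i).ofLp
    rwa [sub_mulVec, dotProduct_sub, map_sub, ← hX.eigenvalues_eq,
      re_dotProduct_mulVec_eq_sum_eigenvalues hY, sub_nonneg] at h
  have hmem (i : ι) : ∑ j, w i j * hY.eigenvalues j ∈ s :=
    hf.1.sum_mem (fun j _ => hw_nonneg i j) (hw_row i) fun j _ => hYs j
  calc ∑ i, f (hX.eigenvalues i)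
      ≤ ∑ i, f (∑ j, w i j * hY.eigenvalues j) :=
        sum_le_sum fun i _ => hmono (hXs i) (hmem i) (hle i)
    _ ≤ ∑ i, ∑ j, w i j * f (hY.eigenvalues j) :=
        sum_le_sum fun i _ => hf.map_sum_le (fun j _ => hw_nonneg i j) (hw_row i) fun j _ => hYs j
    _ = ∑ j, f (hY.eigenvalues j) := by
        rw [sum_comm]
        simp_rw [← sum_mul, hw_col, one_mul]

lemma trace_pow_le_trace_pow (hX : X.PosSemidef) (hXY : (Y - X).PosSemidef) (K : ℕ) :
    (X ^ K).trace ≤ (Y ^ K).trace := by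
  have hY : Y.PosSemidef := by simpa using hX.add hXY
  rw [trace_pow_eq_sum_eigenvalues_pow hX.1, trace_pow_eq_sum_eigenvalues_pow hY.1]
  exact_mod_cast sum_eigenvalues_le_sum_eigenvalues (convexOn_pow K) (pow_left_monotoneOn)
    hX.1 hY.1 hXY hX.eigenvalues_nonneg hY.eigenvalues_nonneg

lemma posSemidef_smul_one_sub {E : Matrix ι ι 𝕜} (hEH : E.IsHermitian) {h : ι → ℝ} {ε : ℝ}
    (hh : ∀ x, 0 < h x) (hE : ∀ x, ∑ y, ‖E x y‖ * h y ≤ ε * h x) :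
    ((ε : 𝕜) • (1 : Matrix ι ι 𝕜) - E).PosSemidef := by
  have hH : ((ε : 𝕜) • (1 : Matrix ι ι 𝕜) - E).IsHermitian :=
    .sub (by simp [IsHermitian, conjTranspose_smul]) hEH
  refine hH.posSemidef_iff_eigenvalues_nonneg.mpr fun i => ?_
  let v := (hH.eigenvectorBasis i).ofLp
  have hv : v ≠ 0 := by simpa [v] using hH.eigenvectorBasis.orthonormal.ne_zero i
  have heigen : E *ᵥ v = ((ε - hH.eigenvalues i : ℝ) : 𝕜) • v := by
    have h := hH.mulVec_eigenvectorBasis i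
    rw [sub_mulVec, smul_mulVec, one_mulVec, RCLike.real_smul_eq_coe_smul (K := 𝕜)] at h
    rw [RCLike.ofReal_sub, sub_smul, ← h, sub_sub_cancel]
  have hnorm := norm_le_of_mulVec_eq_smul hh hE hv heigen
  rw [RCLike.norm_ofReal] at hnorm
  simpa using (le_abs_self _).trans hnorm

lemma posSemidef_sub_smul_one {X : Matrix ι ι ℝ} (hX : X.IsSymm) (hnonneg : ∀ x y, 0 ≤ X x y)
    (hrow : ∀ x, ∑ y, X x y ≤ 1) {c : ℝ} (hdiag : ∀ x, (1 + c) / 2 ≤ X x x) :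
    (X - c • (1 : Matrix ι ι ℝ)).PosSemidef := by
  have habs (x y : ι) : ‖(1 - X) x y‖ = X x y + if x = y then 1 - 2 * X x x else 0 := by
    rcases eq_or_ne x y with rfl | hxy
    · have hle : X x x ≤ 1 :=
        (single_le_sum (fun y _ => hnonneg x y) (mem_univ x)).trans (hrow x)
      simp only [Matrix.sub_apply, one_apply_eq, Real.norm_of_nonneg (sub_nonneg.mpr hle), if_true]
      ring
    · simp [hxy, abs_of_nonneg (hnonneg x y)]
  have hE (x : ι) : ∑ y, ‖(1 - X) x y‖ * 1 ≤ (1 - c) * 1 := by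
    simp only [habs, mul_one, sum_add_distrib, sum_ite_eq, mem_univ, if_true]
    linarith [hrow x, hdiag x]
  have hH : (1 - X).IsHermitian := isHermitian_one.sub (isHermitian_iff_isSymm.mpr hX)
  have hdecomp : X - c • (1 : Matrix ι ι ℝ) = (1 - c) • 1 - (1 - X) := by
    rw [sub_smul, one_smul]
    abel
  rw [hdecomp]
  exact posSemidef_smul_one_sub hH (h := fun _ => 1) (fun _ => one_pos) hE

lemma trace_pow_le_one_add_div_pow_mul {X Y : Matrix ι ι ℝ} (hX : X.PosSemidef) {c ε : ℝ}
    (hc : 0 < c) (hY : (Y - c • (1 : Matrix ι ι ℝ)).PosSemidef) {h : ι → ℝ} (hh : ∀ x, 0 < h x)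
    (hε : 0 ≤ ε) (hXY : ∀ x, ∑ y, |X x y - Y x y| * h y ≤ ε * h x) (K : ℕ) :
    (X ^ K).trace ≤ (1 + ε / c) ^ K * (Y ^ K).trace := by
  have hYH : Y.IsHermitian := by simpa using hY.1.add (isHermitian_one.smul (.all c))
  have hle : ((1 + ε / c) • Y - X).PosSemidef := by
    convert (hY.smul (div_nonneg hε hc.le)).add
      (posSemidef_smul_one_sub (hX.1.sub hYH) hh hXY) using 1
    rw [smul_sub, smul_smul, div_mul_cancel₀ _ hc.ne', add_smul, one_smul]
    simp only [RCLike.ofReal_real_eq_id, id_eq]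
    abel
  simpa [smul_pow] using trace_pow_le_trace_pow hX hle K

end Spectral

section TranspositionWalk

open Equiv Finset Matrix

variable {V : Type*} [Fintype V] [DecidableEq V]

/-- The random walk on a set `X` with an action of the permutations of the positions `V`, where each
step draws two positions independently from `p` and acts by their transposition. For `X = Perm V`
this is the card shuffle itself, for `X = V` the motion of one card and for `X = ι → V` that of a
tuple of cards. -/
def transpositionWalk (p : V → ℝ) (X : Type*) [MulAction (Perm V) X] [DecidableEq X] :
    Matrix X X ℝ :=
  fun x y => ∑ i, ∑ j, if swap i j • x = y then p i * p j else 0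

variable {X : Type*} [MulAction (Perm V) X] [DecidableEq X] {p : V → ℝ}

lemma transpositionWalk_isSymm (p : V → ℝ) : (transpositionWalk p X).IsSymm := by
  ext x y
  simp only [transpose_apply, transpositionWalk]
  refine sum_congr rfl fun i _ => sum_congr rfl fun j _ => ?_
  exact if_congr ((swap_smul_involutive i j).eq_iff.trans eq_comm) rfl rfl

lemma sum_le_transpositionWalk (hp : ∀ i, 0 ≤ p i) {x y : X} (F : Finset (V × V))
    (hF : ∀ q ∈ F, swap q.1 q.2 • x = y) :
    ∑ q ∈ F, p q.1 * p q.2 ≤ transpositionWalk p X x y := by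
  rw [transpositionWalk, ← Fintype.sum_prod_type', ← sum_filter]
  exact sum_le_sum_of_subset_of_nonneg (fun q hq => mem_filter.mpr ⟨mem_univ q, hF q hq⟩)
    fun q _ _ => mul_nonneg (hp q.1) (hp q.2)

lemma transpositionWalk_self_apply (hp : ∑ i, p i = 1) (x y : V) :
    transpositionWalk p V x y = (if x = y then 1 - 2 * p x else 0) + 2 * p x * p y := by
  have hterm (i j : V) : (if swap i j • x = y then p i * p j else 0) =
      (if i = x then p i else 0) * (if j = y then p j else 0) +
      (if i = y then p i else 0) * (if j = x then p j else 0) +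
      (if x = y then p i * p j - (if i = x then p i else 0) * p j
        - p i * (if j = x then p j else 0) else 0) := by
    rw [Perm.smul_def, swap_apply_def]
    grind
  simp only [transpositionWalk, hterm, sum_add_distrib, ← sum_mul_sum, sum_ite_eq', mem_univ,
    if_true]
  split_ifs
  · simp only [sum_sub_distrib, ← sum_mul_sum, sum_ite_eq', mem_univ, if_true, hp]
    ring
  · simp only [sum_const_zero]
    ring

variable [Fintype X]

lemma sum_transpositionWalk_mul (p : V → ℝ) (x : X) (f : X → ℝ) :
    ∑ y, transpositionWalk p X x y * f y = ∑ i, ∑ j, p i * p j * f (swap i j • x) := by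
  simp only [transpositionWalk, sum_mul, ite_mul, zero_mul]
  rw [sum_comm]
  refine sum_congr rfl fun i _ => ?_
  rw [sum_comm]
  simp

lemma transpositionWalk_mem_rowStochastic (hp : p ∈ stdSimplex ℝ V) :
    transpositionWalk p X ∈ rowStochastic ℝ X := by
  refine mem_rowStochastic_iff_sum.mpr ⟨fun x y => ?_, fun x => ?_⟩
  · simpa using sum_le_transpositionWalk hp.1 (x := x) (y := y) ∅ (by simp)
  · simpa [← sum_mul_sum, hp.2] using sum_transpositionWalk_mul p x 1

lemma transpositionWalk_pow_apply (p : V → ℝ) (K : ℕ) (x y : X) :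
    (transpositionWalk p X ^ K) x y =
      ∑ g, (transpositionWalk p (Perm V) ^ K) 1 g * if g • x = y then 1 else 0 := by
  induction K generalizing y with
  | zero =>
    simp only [pow_zero, one_apply, ite_mul, one_mul, zero_mul, sum_ite_eq, mem_univ, if_true,
      one_smul]
  | succ K ih =>
    calc (transpositionWalk p X ^ (K + 1)) x y
        = ∑ g, (transpositionWalk p (Perm V) ^ K) 1 g * transpositionWalk p X (g • x) y := by
          simp only [pow_succ, mul_apply, ih, sum_mul]
          rw [sum_comm]
          simp
      _ = ∑ g, (transpositionWalk p (Perm V) ^ K) 1 g *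
            ∑ h, transpositionWalk p (Perm V) g h * if h • x = y then 1 else 0 := by
          refine sum_congr rfl fun g _ => ?_
          rw [sum_transpositionWalk_mul]
          simp [transpositionWalk, mul_smul]
      _ = _ := by
          simp only [pow_succ, mul_apply, mul_sum, sum_mul, mul_assoc]
          rw [sum_comm]

end TranspositionWalk

section TensorPower

open Finset Matrix

variable {ι V R : Type*} [Fintype ι] [CommSemiring R]

/-- The `ι`-fold tensor power of a square matrix. For a transition matrix it describes a tuple of
independent copies of the chain. -/
def tensorPower (ι : Type*) [Fintype ι] (M : Matrix V V R) : Matrix (ι → V) (ι → V) R :=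
  fun x y => ∏ l, M (x l) (y l)

lemma tensorPower_isSymm {M : Matrix V V R} (hM : M.IsSymm) : (tensorPower ι M).IsSymm := by
  ext x y
  exact prod_congr rfl fun l _ => hM.apply (x l) (y l)

lemma tensorPower_one [DecidableEq V] :
    tensorPower ι (1 : Matrix V V R) = 1 := by
  ext x y
  simp [tensorPower, one_apply, prod_ite_zero, funext_iff]

variable [DecidableEq ι] [Fintype V]

lemma tensorPower_mul (M N : Matrix V V R) :
    tensorPower ι (M * N) = tensorPower ι M * tensorPower ι N := by
  ext x y
  simp only [tensorPower, mul_apply, Fintype.prod_sum, prod_mul_distrib]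

lemma trace_tensorPower (M : Matrix V V R) :
    (tensorPower ι M).trace = M.trace ^ Fintype.card ι := by
  simp only [trace, diag_apply, tensorPower]
  rw [← Fintype.prod_sum fun _ v => M v v, prod_const, card_univ]

variable [DecidableEq V]

lemma tensorPower_pow (M : Matrix V V R) (K : ℕ) :
    tensorPower ι M ^ K = tensorPower ι (M ^ K) := by
  induction K with
  | zero => rw [pow_zero, pow_zero, tensorPower_one]
  | succ K ih => rw [pow_succ, pow_succ, tensorPower_mul, ih]

lemma tensorPower_mem_rowStochastic [PartialOrder R] [IsOrderedRing R] {M : Matrix V V R}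
    (hM : M ∈ rowStochastic R V) : tensorPower ι M ∈ rowStochastic R (ι → V) := by
  refine mem_rowStochastic_iff_sum.mpr ⟨fun x y => prod_nonneg fun l _ => hM.1 _ _, fun x => ?_⟩
  simp only [tensorPower]
  rw [← Fintype.prod_sum fun l v => M (x l) v]
  exact prod_eq_one fun l _ => sum_row_of_mem_rowStochastic hM (x l)

end TensorPower

section Collisions

open Finset

variable {ι V : Type*} [Fintype ι] [DecidableEq ι] [Fintype V] [DecidableEq V] {f : V → ℝ} {c : ℝ}

lemma sum_prod_filter_eq_le (hf : ∀ v, 0 ≤ f v) (hfc : ∀ v, f v ≤ c) {k l : ι} (hkl : k ≠ l) :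
    ∑ x : ι → V with x k = x l, ∏ i, f (x i) ≤ c * (∑ v, f v) ^ (Fintype.card ι - 1) := by
  let rest (y : {i // i ≠ l} → V) : ℝ := ∏ i, f (y i)
  have hsplit (x : ι → V) : ∏ i, f (x i) = f (x l) * rest fun i => x i := by
    rw [Fintype.prod_eq_mul_prod_subtype_ne _ l]
  calc ∑ x : ι → V with x k = x l, ∏ i, f (x i)
      = ∑ q : V × ({i // i ≠ l} → V), if q.2 ⟨k, hkl⟩ = q.1 then f q.1 * rest q.2 else 0 := by
        rw [sum_filter]
        refine Fintype.sum_equiv (Equiv.funSplitAt l V) _ _ fun x => ?_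
        simp only [hsplit, Equiv.funSplitAt_apply]
    _ = ∑ y, f (y ⟨k, hkl⟩) * rest y := by
        rw [Fintype.sum_prod_type_right]
        simp
    _ ≤ ∑ y, c * rest y := by
        gcongr with y
        · exact prod_nonneg fun i _ => hf (y i)
        · exact hfc _
    _ = c * (∑ v, f v) ^ (Fintype.card ι - 1) := by
        rw [← mul_sum, ← Fintype.prod_sum fun _ v => f v, prod_const, card_univ,
          Fintype.card_subtype_compl, Fintype.card_subtype_eq]

lemma sum_prod_filter_not_injective_le (hf : ∀ v, 0 ≤ f v) (hfc : ∀ v, f v ≤ c) :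
    ∑ x : ι → V with ¬ x.Injective, ∏ i, f (x i) ≤
      (Fintype.card ι * (Fintype.card ι - 1) : ℕ) * (c * (∑ v, f v) ^ (Fintype.card ι - 1)) := by
  let P (x : ι → V) : ℝ := ∏ i, f (x i)
  have hP (x : ι → V) : 0 ≤ P x := prod_nonneg fun i _ => hf (x i)
  have hunion (x : ι → V) : (if ¬ x.Injective then P x else 0) ≤
      ∑ q ∈ univ.offDiag, if x q.1 = x q.2 then P x else 0 := by
    have hnonneg (q : ι × ι) : 0 ≤ if x q.1 = x q.2 then P x else 0 := ite_nonneg (hP x) le_rfl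
    split_ifs with hx
    · exact sum_nonneg fun q _ => hnonneg q
    · obtain ⟨k, l, hxkl, hkl⟩ := Function.not_injective_iff.mp hx
      have hmem : (k, l) ∈ univ.offDiag := by simpa using hkl
      simpa [hxkl] using single_le_sum (fun q _ => hnonneg q) hmem
  calc ∑ x : ι → V with ¬ x.Injective, P x
      ≤ ∑ x : ι → V, ∑ q ∈ univ.offDiag, if x q.1 = x q.2 then P x else 0 := by
        rw [sum_filter]
        exact sum_le_sum fun x _ => hunion x
    _ = ∑ q ∈ univ.offDiag, ∑ x : ι → V with x q.1 = x q.2, P x := by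
        rw [sum_comm]
        simp only [sum_filter]
    _ ≤ #(univ : Finset ι).offDiag • (c * (∑ v, f v) ^ (Fintype.card ι - 1)) :=
        sum_le_card_nsmul _ _ _ fun q hq => sum_prod_filter_eq_le hf hfc (mem_offDiag.mp hq).2.2
    _ = _ := by rw [offDiag_card, card_univ, nsmul_eq_mul, Nat.mul_sub_one]

end Collisions

section RowComparison

open Equiv Finset Matrix

lemma one_sub_sum_le_prod_one_sub {ι : Type*} {g : ι → ℝ} (hg : ∀ i, 0 ≤ g i) (hg1 : ∀ i, g i ≤ 1)
    (s : Finset ι) : 1 - ∑ i ∈ s, g i ≤ ∏ i ∈ s, (1 - g i) := by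
  classical
  induction s using Finset.induction_on with
  | empty => simp
  | insert i s hi ih =>
    rw [sum_insert hi, prod_insert hi]
    have hmul : (1 - g i) * (1 - ∑ j ∈ s, g j) ≤ (1 - g i) * ∏ j ∈ s, (1 - g j) :=
      mul_le_mul_of_nonneg_left ih (sub_nonneg.mpr (hg1 i))
    linarith [mul_nonneg (hg i) (sum_nonneg fun j (_ : j ∈ s) => hg j)]

lemma sum_abs_sub_le_two_mul_one_sub_sum_min {T : Type*} [Fintype T] {q r : T → ℝ}
    (hq : q ∈ stdSimplex ℝ T) (hr : r ∈ stdSimplex ℝ T) (s : Finset T) :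
    ∑ y, |q y - r y| ≤ 2 * (1 - ∑ y ∈ s, min (q y) (r y)) := by
  have hmin (y : T) : |q y - r y| = q y + r y - 2 * min (q y) (r y) := by
    rw [← max_sub_min_eq_abs', ← min_add_max (q y) (r y)]
    ring
  have hsub : ∑ y ∈ s, min (q y) (r y) ≤ ∑ y, min (q y) (r y) :=
    sum_le_univ_sum_of_nonneg fun y => le_min (hq.1 y) (hr.1 y)
  simp only [hmin, sum_sub_distrib, sum_add_distrib, ← mul_sum, hq.2, hr.2]
  linarith

variable {ι V : Type*} [Fintype ι] [Fintype V] [DecidableEq V] {p : V → ℝ}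

lemma sum_compl_image (hp : ∑ i, p i = 1) {x : ι → V} (hx : x.Injective) :
    ∑ i ∈ (univ.image x)ᶜ, p i = 1 - ∑ l, p (x l) := by
  rw [eq_sub_iff_add_eq', ← hp, ← sum_add_sum_compl (univ.image x) p,
    sum_image hx.injOn]

lemma one_sub_le_transpositionWalk_self (hp : p ∈ stdSimplex ℝ V) {x : ι → V}
    (hx : x.Injective) :
    1 - 2 * ∑ l, p (x l) ≤ transpositionWalk p (ι → V) x x := by
  have hfix : ∀ q ∈ (univ.image x)ᶜ ×ˢ (univ.image x)ᶜ, swap q.1 q.2 • x = x := by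
    intro q hq
    ext l
    simp only [mem_product, mem_compl, mem_image, mem_univ, true_and, not_exists] at hq
    exact swap_apply_of_ne_of_ne (hq.1 l) (hq.2 l)
  calc 1 - 2 * ∑ l, p (x l) ≤ (1 - ∑ l, p (x l)) * (1 - ∑ l, p (x l)) := by
        linarith [mul_self_nonneg (∑ l, p (x l))]
    _ = ∑ q ∈ (univ.image x)ᶜ ×ˢ (univ.image x)ᶜ, p q.1 * p q.2 := by
        rw [sum_product, ← sum_mul_sum, sum_compl_image hp.2 hx]
    _ ≤ transpositionWalk p (ι → V) x x := sum_le_transpositionWalk hp.1 _ hfix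

lemma one_sub_le_tensorPower_self (hp : p ∈ stdSimplex ℝ V) (hp2 : ∀ i, p i ≤ 1 / 2)
    (x : ι → V) :
    1 - 2 * ∑ l, p (x l) ≤ tensorPower ι (transpositionWalk p V) x x := by
  rw [mul_sum]
  refine (one_sub_sum_le_prod_one_sub (fun l => ?_) (fun l => ?_) univ).trans
    (prod_le_prod (fun l _ => ?_) fun l _ => ?_)
  · linarith [hp.1 (x l)]
  · linarith [hp2 (x l)]
  · linarith [hp2 (x l)]
  · rw [transpositionWalk_self_apply hp.2, if_pos rfl]
    linarith [mul_self_nonneg (p (x l))]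

variable [DecidableEq ι]

lemma two_mul_le_transpositionWalk_update (hp : ∀ i, 0 ≤ p i) {x : ι → V} (hx : x.Injective)
    (l : ι) {z : V} (hz : z ∉ univ.image x) :
    2 * p (x l) * p z ≤ transpositionWalk p (ι → V) x (Function.update x l z) := by
  have hz' (k : ι) : x k ≠ z := fun h => hz (h ▸ mem_image_of_mem x (mem_univ k))
  have hswap : swap (x l) z • x = Function.update x l z := by
    ext k
    rcases eq_or_ne k l with rfl | hkl
    · simp
    · rw [Function.update_of_ne hkl]
      exact swap_apply_of_ne_of_ne (hx.ne hkl) (hz' k)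
  have hpair : ∀ q ∈ ({(x l, z), (z, x l)} : Finset (V × V)),
      swap q.1 q.2 • x = Function.update x l z := by
    simp [hswap, swap_comm z (x l)]
  refine le_of_eq_of_le ?_ (sum_le_transpositionWalk hp _ hpair)
  rw [sum_pair fun h => hz' l (congrArg Prod.fst h)]
  ring

lemma mul_le_tensorPower_update (hp : p ∈ stdSimplex ℝ V) (hp2 : ∀ i, p i ≤ 1 / 2) (x : ι → V)
    (l : ι) {z : V} (hz : z ∉ univ.image x) :
    (1 - 2 * ∑ l, p (x l)) * (2 * p (x l) * p z) ≤
      tensorPower ι (transpositionWalk p V) x (Function.update x l z) := by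
  have hz' : x l ≠ z := fun h => hz (h ▸ mem_image_of_mem x (mem_univ l))
  have hstoch := transpositionWalk_mem_rowStochastic (X := V) hp
  have hdiag : 1 - 2 * ∑ l, p (x l) ≤
      ∏ k ∈ univ.erase l, transpositionWalk p V (x k) (x k) := by
    refine (one_sub_le_tensorPower_self hp hp2 x).trans ?_
    rw [tensorPower, ← mul_prod_erase univ _ (mem_univ l)]
    exact mul_le_of_le_one_left (prod_nonneg fun k _ => hstoch.1 _ _)
      (le_one_of_mem_rowStochastic hstoch)
  have hupdate : tensorPower ι (transpositionWalk p V) x (Function.update x l z) =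
      (∏ k ∈ univ.erase l, transpositionWalk p V (x k) (x k)) * (2 * p (x l) * p z) := by
    rw [tensorPower, ← prod_erase_mul univ _ (mem_univ l), Function.update_self,
      transpositionWalk_self_apply hp.2, if_neg hz', zero_add]
    congr 1
    exact prod_congr rfl fun k hk => by rw [Function.update_of_ne (ne_of_mem_erase hk)]
  rw [hupdate]
  exact mul_le_mul_of_nonneg_right hdiag (by have := hp.1 (x l); have := hp.1 z; positivity)

lemma injOn_update (x : ι → V) :
    Set.InjOn (fun q : ι × V => Function.update x q.1 q.2)
      (univ ×ˢ (univ.image x)ᶜ : Finset (ι × V)) := by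
  rintro ⟨k, y⟩ hy ⟨l, z⟩ hz h
  simp only [coe_product, coe_univ, coe_compl, coe_image, Set.mem_prod, Set.mem_univ, true_and,
    Set.mem_compl_iff, Set.image_univ, Set.mem_range, not_exists] at hy hz
  have hk := congrFun h k
  rcases eq_or_ne k l with rfl | hkl
  · simpa using hk
  · exact absurd (by simpa [hkl] using hk.symm) (hy k)

lemma self_notMem_image_update (x : ι → V) :
    x ∉ (univ ×ˢ (univ.image x)ᶜ).image fun q : ι × V => Function.update x q.1 q.2 := by
  simp only [mem_image, mem_product, mem_univ, true_and, mem_compl, not_exists, not_and]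
  rintro ⟨l, z⟩ hz h
  exact hz l (by simpa using (congrFun h l).symm)

/-- The two walks share the mass of not moving and of moving a single card to a free position; all
other moves involve two of the marked cards, hence the quadratic bound. -/
lemma sum_abs_tensorPower_sub_transpositionWalk_le (hp : p ∈ stdSimplex ℝ V)
    (hp2 : ∀ i, p i ≤ 1 / 2) {x : ι → V} (hx : x.Injective) :
    ∑ y, |tensorPower ι (transpositionWalk p V) x y - transpositionWalk p (ι → V) x y| ≤
      12 * (∑ l, p (x l)) ^ 2 := by
  set s := ∑ l, p (x l)
  have hs : 0 ≤ s := sum_nonneg fun l _ => hp.1 (x l)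
  have hR := tensorPower_mem_rowStochastic (ι := ι)
    (transpositionWalk_mem_rowStochastic (X := V) hp)
  have hT := transpositionWalk_mem_rowStochastic (X := ι → V) hp
  let common (y : ι → V) : ℝ :=
    min (tensorPower ι (transpositionWalk p V) x y) (transpositionWalk p (ι → V) x y)
  have hself : 1 - 2 * s ≤ common x :=
    le_min (one_sub_le_tensorPower_self hp hp2 x) (one_sub_le_transpositionWalk_self hp hx)
  have hmove (l : ι) {z : V} (hz : z ∈ (univ.image x)ᶜ) :
      (1 - 2 * s) * (2 * p (x l) * p z) ≤ common (Function.update x l z) := by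
    refine le_min (mul_le_tensorPower_update hp hp2 x l (mem_compl.mp hz)) (le_trans ?_
      (two_mul_le_transpositionWalk_update hp.1 hx l (mem_compl.mp hz)))
    have : 0 ≤ 2 * p (x l) * p z := by have := hp.1 (x l); have := hp.1 z; positivity
    exact mul_le_of_le_one_left this (by linarith)
  let moves := (univ ×ˢ (univ.image x)ᶜ).image fun q : ι × V => Function.update x q.1 q.2
  have hmoves : (1 - 2 * s) * (2 * s * (1 - s)) ≤ ∑ y ∈ moves, common y := by
    calc (1 - 2 * s) * (2 * s * (1 - s))
        = ∑ l, ∑ z ∈ (univ.image x)ᶜ, (1 - 2 * s) * (2 * p (x l) * p z) := by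
          simp only [← mul_sum, sum_compl_image hp.2 hx]
          rw [← sum_mul, ← mul_sum]
      _ ≤ ∑ l, ∑ z ∈ (univ.image x)ᶜ, common (Function.update x l z) :=
          sum_le_sum fun l _ => sum_le_sum fun z hz => hmove l hz
      _ = ∑ y ∈ moves, common y := by rw [sum_image (injOn_update x), sum_product]
  have hsum := sum_abs_sub_le_two_mul_one_sub_sum_min
    (r := transpositionWalk p (ι → V) x)
    ⟨hR.1 x, sum_row_of_mem_rowStochastic hR x⟩ ⟨hT.1 x, sum_row_of_mem_rowStochastic hT x⟩
    (insert x moves)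
  rw [sum_insert (self_notMem_image_update x)] at hsum
  nlinarith [pow_nonneg hs 3]

end RowComparison

section FactorialMoments

open Equiv Finset Matrix Function

lemma sum_le_card_mul_sq {ι V : Type*} [Fintype ι] {p : V → ℝ} {η : ℝ} (hpη : ∀ v, p v ≤ η ^ 2)
    (x : ι → V) : ∑ l, p (x l) ≤ Fintype.card ι * η ^ 2 := by
  simpa using sum_le_card_nsmul univ (fun l => p (x l)) _ fun l _ => hpη (x l)

variable {V : Type*} [Fintype V] [DecidableEq V] {ι : Type*} [Fintype ι] {p : V → ℝ}

lemma transpositionWalk_eq_zero_of_injective (p : V → ℝ) {x y : ι → V} (hx : x.Injective)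
    (hy : ¬ y.Injective) : transpositionWalk p (ι → V) x y = 0 := by
  refine sum_eq_zero fun i _ => sum_eq_zero fun j _ => if_neg ?_
  rintro rfl
  exact hy ((MulAction.injective (swap i j)).comp hx)

lemma posSemidef_tensorPower_sub_half (hp : p ∈ stdSimplex ℝ V) (hp2 : ∀ v, p v ≤ 1 / 2)
    (hs : ∀ x : ι → V, ∑ l, p (x l) ≤ 1 / 8) :
    (tensorPower ι (transpositionWalk p V) -
      (1 / 2 : ℝ) • (1 : Matrix (ι → V) (ι → V) ℝ)).PosSemidef := by
  classical
  have hR := tensorPower_mem_rowStochastic (ι := ι)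
    (transpositionWalk_mem_rowStochastic (X := V) hp)
  exact posSemidef_sub_smul_one (tensorPower_isSymm (transpositionWalk_isSymm p)) hR.1
    (fun x => (sum_row_of_mem_rowStochastic hR x).le)
    fun x => by linarith [hs x, one_sub_le_tensorPower_self hp hp2 x]

variable [DecidableEq ι]

/-- The walk on tuples that moves injective tuples by `transpositionWalk` and lets the entries of
the other tuples perform independent one-card walks killed on reaching an injective tuple. It
interpolates between the shuffle and the independent walks in the trace comparison. -/
def hybridWalk (p : V → ℝ) (ι : Type*) [Fintype ι] [DecidableEq ι] : Matrix (ι → V) (ι → V) ℝ :=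
  fun x y => if x.Injective then transpositionWalk p (ι → V) x y
    else if y.Injective then 0 else tensorPower ι (transpositionWalk p V) x y

lemma hybridWalk_isSymm (p : V → ℝ) : (hybridWalk p ι).IsSymm := by
  refine IsSymm.ext fun x y => ?_
  have hT := (transpositionWalk_isSymm (X := ι → V) p).apply x y
  have hR := (tensorPower_isSymm (ι := ι) (transpositionWalk_isSymm (X := V) p)).apply x y
  simp only [hybridWalk]
  split_ifs with hy hx hx
  · exact hT
  · exact transpositionWalk_eq_zero_of_injective p hy hx
  · exact (transpositionWalk_eq_zero_of_injective p hx hy).symm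
  · exact hR

lemma hybridWalk_nonneg (hp : p ∈ stdSimplex ℝ V) (x y : ι → V) : 0 ≤ hybridWalk p ι x y := by
  rw [hybridWalk]
  split_ifs
  · exact (transpositionWalk_mem_rowStochastic hp).1 x y
  · exact le_rfl
  · exact (tensorPower_mem_rowStochastic (transpositionWalk_mem_rowStochastic hp)).1 x y

lemma hybridWalk_le_tensorPower (hp : p ∈ stdSimplex ℝ V) {x : ι → V} (hx : ¬ x.Injective)
    (y : ι → V) : hybridWalk p ι x y ≤ tensorPower ι (transpositionWalk p V) x y := by
  rw [hybridWalk, if_neg hx]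
  split_ifs
  · exact (tensorPower_mem_rowStochastic (transpositionWalk_mem_rowStochastic hp)).1 x y
  · exact le_rfl

lemma sum_hybridWalk_le_one (hp : p ∈ stdSimplex ℝ V) (x : ι → V) :
    ∑ y, hybridWalk p ι x y ≤ 1 := by
  by_cases hx : x.Injective
  · simpa only [hybridWalk, if_pos hx] using
      (sum_row_of_mem_rowStochastic (transpositionWalk_mem_rowStochastic hp) x).le
  · exact (sum_le_sum fun y _ => hybridWalk_le_tensorPower hp hx y).trans_eq
      (sum_row_of_mem_rowStochastic
        (tensorPower_mem_rowStochastic (transpositionWalk_mem_rowStochastic hp)) x)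

lemma hybridWalk_pow_of_injective (p : V → ℝ) (K : ℕ) {x : ι → V} (hx : x.Injective) (y : ι → V) :
    (hybridWalk p ι ^ K) x y = (transpositionWalk p (ι → V) ^ K) x y := by
  induction K generalizing x with
  | zero => rfl
  | succ K ih =>
    simp only [pow_succ', mul_apply]
    refine sum_congr rfl fun z _ => ?_
    rw [hybridWalk, if_pos hx]
    by_cases hz : z.Injective
    · rw [ih hz]
    · rw [transpositionWalk_eq_zero_of_injective p hx hz, zero_mul, zero_mul]

lemma hybridWalk_pow_le_of_not_injective (hp : p ∈ stdSimplex ℝ V) (K : ℕ) {x : ι → V}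
    (hx : ¬ x.Injective) (y : ι → V) :
    (hybridWalk p ι ^ K) x y ≤ ∏ i, (transpositionWalk p V ^ K) (x i) (y i) := by
  have hR := tensorPower_mem_rowStochastic (ι := ι)
    (transpositionWalk_mem_rowStochastic (X := V) hp)
  suffices (hybridWalk p ι ^ K) x y ≤ (tensorPower ι (transpositionWalk p V) ^ K) x y by
    rwa [tensorPower_pow] at this
  induction K generalizing x with
  | zero => rfl
  | succ K ih =>
    simp only [pow_succ', mul_apply]
    refine sum_le_sum fun z _ => ?_
    by_cases hz : z.Injective
    · rw [hybridWalk, if_neg hx, if_pos hz, zero_mul]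
      exact mul_nonneg (hR.1 x z) ((pow_mem hR K).1 z y)
    · exact mul_le_mul (hybridWalk_le_tensorPower hp hx z) (ih hz)
        (pow_apply_nonneg (hybridWalk_nonneg hp) K z y) (hR.1 x z)

/-- The `m`-th factorial moment of the number of fixed points after `K` steps of the shuffle. -/
def factorialMoment (p : V → ℝ) (K m : ℕ) : ℝ :=
  ∑ π, (transpositionWalk p (Perm V) ^ K) 1 π * ((#{i | π i = i}).descFactorial m : ℕ)

lemma card_injective_fixed (π : Perm V) (m : ℕ) :
    #{x : Fin m → V | x.Injective ∧ π • x = x} = (#{i | π i = i}).descFactorial m := by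
  have hemb : Fintype.card (Fin m ↪ {i // π i = i}) = (#{i | π i = i}).descFactorial m := by
    rw [Fintype.card_embedding_eq, Fintype.card_fin, Fintype.card_subtype]
  rw [← hemb, ← Fintype.card_subtype]
  exact Fintype.card_congr
    { toFun := fun x => ⟨fun l => ⟨x.1 l, congrFun x.2.2 l⟩, fun _ _ h =>
        x.2.1 (congrArg Subtype.val h)⟩
      invFun := fun e => ⟨fun l => (e l).1, fun _ _ h => e.injective (Subtype.ext h),
        funext fun l => (e l).2⟩ }

lemma factorialMoment_eq_sum_injective (p : V → ℝ) (K m : ℕ) :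
    factorialMoment p K m =
      ∑ x : Fin m → V with x.Injective, (transpositionWalk p (Fin m → V) ^ K) x x := by
  rw [sum_congr rfl fun x _ => transpositionWalk_pow_apply p K x x, sum_comm]
  refine sum_congr rfl fun π _ => ?_
  rw [← mul_sum, sum_boole, filter_filter, card_injective_fixed]

lemma trace_hybridWalk_pow (p : V → ℝ) (K m : ℕ) :
    (hybridWalk p (Fin m) ^ K).trace = factorialMoment p K m +
      ∑ x : Fin m → V with ¬ x.Injective, (hybridWalk p (Fin m) ^ K) x x := by
  rw [trace, ← sum_filter_add_sum_filter_not univ fun x : Fin m → V => x.Injective,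
    factorialMoment_eq_sum_injective]
  congr 1
  exact sum_congr rfl fun x hx => hybridWalk_pow_of_injective p K (mem_filter.mp hx).2 x

lemma factorialMoment_le_trace_hybridWalk_pow (hp : p ∈ stdSimplex ℝ V) (K m : ℕ) :
    factorialMoment p K m ≤ (hybridWalk p (Fin m) ^ K).trace := by
  rw [trace_hybridWalk_pow]
  exact le_add_of_nonneg_right (sum_nonneg fun x _ => pow_apply_nonneg (hybridWalk_nonneg hp) K x x)

lemma trace_hybridWalk_pow_le (hp : p ∈ stdSimplex ℝ V) {K : ℕ} {M : ℝ}
    (hM : ∀ v, (transpositionWalk p V ^ K) v v ≤ M) (m : ℕ) :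
    (hybridWalk p (Fin m) ^ K).trace ≤ factorialMoment p K m +
      (m * (m - 1) : ℕ) * (M * (transpositionWalk p V ^ K).trace ^ (m - 1)) := by
  have hpow := pow_mem (transpositionWalk_mem_rowStochastic (X := V) hp) K
  rw [trace_hybridWalk_pow]
  gcongr
  calc ∑ x : Fin m → V with ¬ x.Injective, (hybridWalk p (Fin m) ^ K) x x
      ≤ ∑ x : Fin m → V with ¬ x.Injective, ∏ i, (transpositionWalk p V ^ K) (x i) (x i) :=
        sum_le_sum fun x hx => hybridWalk_pow_le_of_not_injective hp K (mem_filter.mp hx).2 x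
    _ ≤ _ := by
        simpa [trace] using sum_prod_filter_not_injective_le (ι := Fin m)
          (f := fun v => (transpositionWalk p V ^ K) v v) (fun v => hpow.1 v v) hM

variable {η : ℝ}

lemma one_sub_le_hybridWalk_self (hp : p ∈ stdSimplex ℝ V) (hp2 : ∀ v, p v ≤ 1 / 2) (x : ι → V) :
    1 - 2 * ∑ l, p (x l) ≤ hybridWalk p ι x x := by
  rw [hybridWalk]
  split_ifs with hx
  · exact one_sub_le_transpositionWalk_self hp hx
  · exact one_sub_le_tensorPower_self hp hp2 x

lemma sum_injective_tensorPower_le (hp : p ∈ stdSimplex ℝ V)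
    (hp2 : ∀ v, p v ≤ 1 / 2) {x : ι → V} (hx : ¬ x.Injective) :
    ∑ y : ι → V with y.Injective, tensorPower ι (transpositionWalk p V) x y ≤
      2 * ∑ l, p (x l) := by
  have hR := tensorPower_mem_rowStochastic (ι := ι)
    (transpositionWalk_mem_rowStochastic (X := V) hp)
  have hle : ∑ y : ι → V with y.Injective, tensorPower ι (transpositionWalk p V) x y ≤
      ∑ y ∈ univ.erase x, tensorPower ι (transpositionWalk p V) x y :=
    sum_le_sum_of_subset_of_nonneg
      (fun y hy => mem_erase.mpr ⟨by rintro rfl; exact hx (mem_filter.mp hy).2, mem_univ y⟩)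
      fun y _ _ => hR.1 x y
  have hsum := add_sum_erase univ (tensorPower ι (transpositionWalk p V) x) (mem_univ x)
  rw [sum_row_of_mem_rowStochastic hR] at hsum
  linarith [one_sub_le_tensorPower_self hp hp2 x]

/-- Non-injective tuples are few but are left at a rate `η ^ 2`; giving them the weight `η⁻¹`
balances the two kinds of rows and yields an error `η ^ 3` in place of `η ^ 2`. -/
lemma sum_abs_tensorPower_sub_hybridWalk_mul_le (hp : p ∈ stdSimplex ℝ V) (hη : 0 < η)
    (hη2 : η ^ 2 ≤ 1 / 2) (hpη : ∀ v, p v ≤ η ^ 2) (x : ι → V) :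
    ∑ y, |tensorPower ι (transpositionWalk p V) x y - hybridWalk p ι x y| *
        (if y.Injective then 1 else η⁻¹) ≤
      12 * Fintype.card ι ^ 2 * η ^ 3 * if x.Injective then 1 else η⁻¹ := by
  have hp2 (v : V) : p v ≤ 1 / 2 := (hpη v).trans hη2
  have hs := sum_le_card_mul_sq hpη x
  have hs0 : 0 ≤ ∑ l, p (x l) := sum_nonneg fun l _ => hp.1 (x l)
  have hη1 : 1 ≤ η⁻¹ := (one_le_inv₀ hη).mpr (by nlinarith)
  by_cases hx : x.Injective
  · calc ∑ y, |tensorPower ι (transpositionWalk p V) x y - hybridWalk p ι x y| *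
          (if y.Injective then 1 else η⁻¹)
        ≤ ∑ y, |tensorPower ι (transpositionWalk p V) x y - transpositionWalk p (ι → V) x y| *
            η⁻¹ := by
          simp only [hybridWalk, if_pos hx]
          gcongr
          split_ifs <;> simp [hη1]
      _ ≤ 12 * (Fintype.card ι * η ^ 2) ^ 2 * η⁻¹ := by
          rw [← sum_mul]
          gcongr
          exact (sum_abs_tensorPower_sub_transpositionWalk_le hp hp2 hx).trans (by gcongr)
      _ = _ := by
          rw [if_pos hx]
          field_simp
  · have hcard : (Fintype.card ι : ℝ) ≤ Fintype.card ι ^ 2 := by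
      exact_mod_cast Nat.le_self_pow two_ne_zero _
    have hR := tensorPower_mem_rowStochastic (ι := ι)
      (transpositionWalk_mem_rowStochastic (X := V) hp)
    calc ∑ y, |tensorPower ι (transpositionWalk p V) x y - hybridWalk p ι x y| *
          (if y.Injective then 1 else η⁻¹)
        = ∑ y : ι → V with y.Injective, tensorPower ι (transpositionWalk p V) x y := by
          rw [sum_filter]
          refine sum_congr rfl fun y _ => ?_
          rw [hybridWalk, if_neg hx]
          split_ifs
          · rw [sub_zero, mul_one, abs_of_nonneg (hR.1 x y)]
          · simp
      _ ≤ 2 * (Fintype.card ι * η ^ 2) :=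
          (sum_injective_tensorPower_le hp hp2 hx).trans (by gcongr)
      _ ≤ 12 * Fintype.card ι ^ 2 * η ^ 2 := by nlinarith [sq_nonneg η]
      _ = _ := by
          rw [if_neg hx]
          field_simp

lemma posSemidef_hybridWalk_sub_half (hp : p ∈ stdSimplex ℝ V) (hp2 : ∀ v, p v ≤ 1 / 2)
    (hs : ∀ x : ι → V, ∑ l, p (x l) ≤ 1 / 8) :
    (hybridWalk p ι - (1 / 2 : ℝ) • (1 : Matrix (ι → V) (ι → V) ℝ)).PosSemidef :=
  posSemidef_sub_smul_one (hybridWalk_isSymm p) (hybridWalk_nonneg hp)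
    (sum_hybridWalk_le_one hp)
    fun x => by linarith [hs x, one_sub_le_hybridWalk_self hp hp2 x]

lemma trace_hybridWalk_pow_and_trace_pow_le (hp : p ∈ stdSimplex ℝ V) (hη : 0 < η)
    (hη2 : η ^ 2 ≤ 1 / 2) (hηι : Fintype.card ι * η ^ 2 ≤ 1 / 8) (hpη : ∀ v, p v ≤ η ^ 2) (K : ℕ) :
    (hybridWalk p ι ^ K).trace ≤ (1 + 24 * Fintype.card ι ^ 2 * η ^ 3) ^ K *
        (transpositionWalk p V ^ K).trace ^ Fintype.card ι ∧
      (transpositionWalk p V ^ K).trace ^ Fintype.card ι ≤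
        (1 + 24 * Fintype.card ι ^ 2 * η ^ 3) ^ K * (hybridWalk p ι ^ K).trace := by
  have hp2 (v : V) : p v ≤ 1 / 2 := (hpη v).trans hη2
  have hs (x : ι → V) : ∑ l, p (x l) ≤ 1 / 8 :=
    (sum_le_card_mul_sq hpη x).trans hηι
  have hR := posSemidef_tensorPower_sub_half hp hp2 hs
  have hH := posSemidef_hybridWalk_sub_half hp hp2 hs
  have hε : 0 ≤ 12 * (Fintype.card ι : ℝ) ^ 2 * η ^ 3 := by positivity
  have hrow := sum_abs_tensorPower_sub_hybridWalk_mul_le (ι := ι) hp hη hη2 hpη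
  have hh (x : ι → V) : 0 < if x.Injective then 1 else η⁻¹ := by split_ifs <;> positivity
  have hc : 1 + 12 * (Fintype.card ι : ℝ) ^ 2 * η ^ 3 / (1 / 2) =
    1 + 24 * Fintype.card ι ^ 2 * η ^ 3 := by ring
  rw [← trace_tensorPower, ← tensorPower_pow, ← hc]
  have hpos {X : Matrix (ι → V) (ι → V) ℝ}
      (hX : (X - (1 / 2 : ℝ) • (1 : Matrix (ι → V) (ι → V) ℝ)).PosSemidef) : X.PosSemidef := by
    simpa using hX.add (PosSemidef.one.smul (one_half_pos (α := ℝ)).le)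
  exact ⟨trace_pow_le_one_add_div_pow_mul (hpos hH) one_half_pos hR hh hε
      (fun x => by simpa only [abs_sub_comm] using hrow x) K,
    trace_pow_le_one_add_div_pow_mul (hpos hR) one_half_pos hH hh hε hrow K⟩

end FactorialMoments

section MethodOfFactorialMoments

open Filter Finset Topology
open scoped Nat

variable {α : Type*} {l : Filter α}

lemma tendsto_of_abs_sub_le_of_tendsto {β : Type*} {l' : Filter β} [l'.NeBot] {f : α → ℝ}
    {g r : β → α → ℝ} {g' r' : β → ℝ} {L : ℝ} (hle : ∀ j, ∀ᶠ n in l, |f n - g j n| ≤ r j n)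
    (hg : ∀ j, Tendsto (g j) l (𝓝 (g' j))) (hr : ∀ j, Tendsto (r j) l (𝓝 (r' j)))
    (hg' : Tendsto g' l' (𝓝 L)) (hr' : Tendsto r' l' (𝓝 0)) : Tendsto f l (𝓝 L) := by
  refine Metric.tendsto_nhds.mpr fun ε hε => ?_
  have hε4 : 0 < ε / 4 := by positivity
  obtain ⟨j, hgj, hrj⟩ := ((Metric.tendsto_nhds.mp hg' _ hε4).and
    (Metric.tendsto_nhds.mp hr' _ hε4)).exists
  filter_upwards [hle j, Metric.tendsto_nhds.mp (hg j) _ hε4,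
    Metric.tendsto_nhds.mp (hr j) _ hε4] with n hle hgn hrn
  rw [Real.dist_eq, abs_lt] at *
  rw [abs_le] at hle
  constructor <;> linarith

lemma descFactorial_add_div (X k j : ℕ) :
    (X.descFactorial (k + j) : ℝ) / (k ! * j !) = X.choose k * (X - k).choose j := by
  have h := Nat.descFactorial_mul_descFactorial (n := X) (Nat.le_add_right k j)
  rw [Nat.add_sub_cancel_left, Nat.descFactorial_eq_factorial_mul_choose,
    Nat.descFactorial_eq_factorial_mul_choose] at h
  rw [← h]
  push_cast
  field_simp

lemma abs_sum_range_neg_one_pow_mul_choose_le {M : ℕ} (hM : M ≠ 0) (J : ℕ) :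
    |∑ j ∈ range J, (-1 : ℝ) ^ j * M.choose j| ≤ M.choose J := by
  obtain ⟨M, rfl⟩ := Nat.exists_eq_succ_of_ne_zero hM
  rcases J with _ | J
  · simp
  · have h : ∑ j ∈ range (J + 1), (-1 : ℝ) ^ j * (M + 1).choose j = (-1) ^ J * M.choose J := by
      exact_mod_cast Int.alternating_sum_range_choose_eq_choose (n := M) (m := J)
    rw [Nat.succ_eq_add_one, h, abs_mul, abs_neg_one_pow, one_mul, Nat.abs_cast]
    exact_mod_cast (Nat.choose_succ_succ M J).symm ▸ Nat.le_add_right _ _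

lemma abs_ite_eq_sub_sum_descFactorial_le (X k J : ℕ) :
    |(if X = k then (1 : ℝ) else 0) -
        ∑ j ∈ range J, (-1 : ℝ) ^ j * (X.descFactorial (k + j) / (k ! * j !))| ≤
      X.descFactorial (k + J) / (k ! * J !) := by
  simp only [descFactorial_add_div, mul_left_comm _ (X.choose k : ℝ), ← mul_sum]
  rcases lt_trichotomy X k with h | rfl | h
  · simp [h.ne, Nat.choose_eq_zero_of_lt h]
  · rcases J with _ | J
    · simp
    · simp [sum_range_succ']
  · rw [if_neg h.ne', zero_sub, abs_neg, abs_mul, Nat.abs_cast]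
    gcongr
    exact abs_sum_range_neg_one_pow_mul_choose_le (Nat.sub_ne_zero_of_lt h) J

lemma tendsto_sum_range_poisson (L : ℝ) (k : ℕ) :
    Tendsto (fun J => ∑ j ∈ range J, (-1) ^ j * (L ^ (k + j) / (k ! * j !))) atTop
      (𝓝 (Real.exp (-L) * L ^ k / k !)) := by
  have h : HasSum (fun j => (-L) ^ j / j !) (Real.exp (-L)) := by
    rw [Real.exp_eq_exp_ℝ]
    exact NormedSpace.expSeries_div_hasSum_exp (-L)
  rw [mul_div_assoc]
  refine (h.tendsto_sum_nat.mul_const (L ^ k / k !)).congr fun J => ?_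
  rw [sum_mul]
  refine sum_congr rfl fun j _ => ?_
  rw [neg_pow, pow_add]
  field_simp

lemma tendsto_pow_add_div_factorial (L : ℝ) (k : ℕ) :
    Tendsto (fun J => L ^ (k + J) / (k ! * J !)) atTop (𝓝 0) := by
  have h := (FloorSemiring.tendsto_pow_div_factorial_atTop L).const_mul (L ^ k / k !)
  rw [mul_zero] at h
  refine h.congr fun J => ?_
  rw [pow_add]
  field_simp

/-- The Bonferroni inequalities bound the error of truncating the inversion of the factorial
moments by the first omitted term, which is uniform enough to interchange the limits. -/
lemma tendsto_sum_filter_eq_of_tendsto_descFactorial {Ω : α → Type*} [∀ n, Fintype (Ω n)]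
    {w : ∀ n, Ω n → ℝ} {X : ∀ n, Ω n → ℕ} {L : ℝ} (hw : ∀ᶠ n in l, ∀ ω, 0 ≤ w n ω)
    (hmoment : ∀ m, Tendsto (fun n => ∑ ω, w n ω * (X n ω).descFactorial m) l (𝓝 (L ^ m))) (k : ℕ) :
    Tendsto (fun n => ∑ ω with X n ω = k, w n ω) l (𝓝 (Real.exp (-L) * L ^ k / k !)) := by
  let moment (m : ℕ) (n : α) : ℝ := ∑ ω, w n ω * (X n ω).descFactorial m
  refine tendsto_of_abs_sub_le_of_tendsto
    (g := fun J n => ∑ j ∈ range J, (-1) ^ j * (moment (k + j) n / (k ! * j !)))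
    (r := fun J n => moment (k + J) n / (k ! * J !)) (fun J => ?_)
    (fun J => tendsto_finsetSum _ fun j _ => ((hmoment (k + j)).div_const _).const_mul _)
    (fun J => (hmoment (k + J)).div_const _) (tendsto_sum_range_poisson L k)
    (tendsto_pow_add_div_factorial L k)
  filter_upwards [hw] with n hw
  have hsum : ∑ j ∈ range J, (-1) ^ j * (moment (k + j) n / (k ! * j !)) =
      ∑ ω, w n ω * ∑ j ∈ range J, (-1 : ℝ) ^ j * ((X n ω).descFactorial (k + j) / (k ! * j !)) := by
    simp only [moment, mul_sum, sum_div]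
    rw [sum_comm]
    refine sum_congr rfl fun ω _ => sum_congr rfl fun j _ => ?_
    ring
  calc |∑ ω with X n ω = k, w n ω - ∑ j ∈ range J, (-1) ^ j * (moment (k + j) n / (k ! * j !))|
      = |∑ ω, w n ω * ((if X n ω = k then 1 else 0) -
          ∑ j ∈ range J, (-1 : ℝ) ^ j * ((X n ω).descFactorial (k + j) / (k ! * j !)))| := by
        simp only [hsum, mul_sub, sum_sub_distrib, mul_ite, mul_one, mul_zero, sum_filter]
    _ ≤ ∑ ω, |w n ω * ((if X n ω = k then 1 else 0) -
          ∑ j ∈ range J, (-1 : ℝ) ^ j * ((X n ω).descFactorial (k + j) / (k ! * j !)))| :=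
        abs_sum_le_sum_abs _ _
    _ ≤ ∑ ω, w n ω * ((X n ω).descFactorial (k + J) / (k ! * J !)) := by
        refine sum_le_sum fun ω _ => ?_
        rw [abs_mul, abs_of_nonneg (hw ω)]
        exact mul_le_mul_of_nonneg_left (abs_ite_eq_sub_sum_descFactorial_le _ _ _) (hw ω)
    _ = moment (k + J) n / (k ! * J !) := by simp only [moment, sum_div, mul_div_assoc]

end MethodOfFactorialMoments

section FactorialMomentLimit

open Equiv Filter Finset Matrix Topology
open scoped Nat

variable {α : Type*} {l : Filter α}

lemma tendsto_one_add_pow_one {x : α → ℝ} {K : α → ℕ} (hx : ∀ᶠ n in l, 0 ≤ x n)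
    (hKx : Tendsto (fun n => K n * x n) l (𝓝 0)) :
    Tendsto (fun n => (1 + x n) ^ K n) l (𝓝 1) := by
  refine tendsto_of_tendsto_of_tendsto_of_le_of_le' tendsto_const_nhds
    (by simpa using hKx.rexp) ?_ ?_
  · filter_upwards [hx] with n hn using one_le_pow₀ (by linarith)
  · filter_upwards [hx] with n hn
    rw [Real.exp_nat_mul]
    gcongr
    linarith [Real.add_one_le_exp (x n)]

variable {V : α → Type*} [∀ n, Fintype (V n)] [∀ n, DecidableEq (V n)] {p : ∀ n, V n → ℝ}
  {K : α → ℕ} {η M : α → ℝ} {L : ℝ}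

/-- As `K * η ^ 3` tends to zero, the marked cards move like independent ones up to time `K`, and
the trace of a tensor power is the power of the trace. -/
lemma tendsto_factorialMoment (hp : ∀ᶠ n in l, p n ∈ stdSimplex ℝ (V n))
    (hη : ∀ᶠ n in l, 0 < η n) (hη0 : Tendsto η l (𝓝 0)) (hpη : ∀ᶠ n in l, ∀ v, p n v ≤ η n ^ 2)
    (hKη : Tendsto (fun n => K n * η n ^ 3) l (𝓝 0))
    (htrace : Tendsto (fun n => (transpositionWalk (p n) (V n) ^ K n).trace) l (𝓝 L))
    (hdiag : ∀ᶠ n in l, ∀ v, (transpositionWalk (p n) (V n) ^ K n) v v ≤ M n)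
    (hM : Tendsto M l (𝓝 0)) (m : ℕ) :
    Tendsto (fun n => factorialMoment (p n) (K n) m) l (𝓝 (L ^ m)) := by
  let T (n : α) : ℝ := (transpositionWalk (p n) (V n) ^ K n).trace
  let C (n : α) : ℝ := (1 + 24 * m ^ 2 * η n ^ 3) ^ K n
  let collisions (n : α) : ℝ := (m * (m - 1) : ℕ) * (M n * T n ^ (m - 1))
  have hC : Tendsto C l (𝓝 1) := by
    refine tendsto_one_add_pow_one (hη.mono fun n hn => by positivity) ?_
    convert hKη.const_mul (24 * m ^ 2 : ℝ) using 2
    · ring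
    · ring
  have hcoll : Tendsto collisions l (𝓝 0) := by
    simpa only [zero_mul, mul_zero] using
      (hM.mul (htrace.pow (m - 1))).const_mul ((m * (m - 1) : ℕ) : ℝ)
  have hη2 : Tendsto (fun n => η n ^ 2) l (𝓝 0) := by simpa using hη0.pow 2
  have hmη : Tendsto (fun n => m * η n ^ 2) l (𝓝 0) := by simpa using hη2.const_mul (m : ℝ)
  have hlower : Tendsto (fun n => T n ^ m / C n - collisions n) l (𝓝 (L ^ m)) := by
    simpa using ((htrace.pow m).div hC one_ne_zero).sub hcoll
  have hupper : Tendsto (fun n => C n * T n ^ m) l (𝓝 (L ^ m)) := by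
    simpa using hC.mul (htrace.pow m)
  have hcompare : ∀ᶠ n in l, T n ^ m / C n - collisions n ≤ factorialMoment (p n) (K n) m ∧
      factorialMoment (p n) (K n) m ≤ C n * T n ^ m := by
    filter_upwards [hp, hη, hpη, hdiag, hη2.eventually_le_const (one_half_pos (α := ℝ)),
      hmη.eventually_le_const (by norm_num : (0 : ℝ) < 1 / 8)] with n hp hη hpη hdiag hη2 hmη
    have htraces := trace_hybridWalk_pow_and_trace_pow_le (ι := Fin m) hp hη hη2
      (by simpa using hmη) hpη (K n)
    rw [Fintype.card_fin] at htraces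
    have hCpos : 0 < C n := by positivity
    refine ⟨?_, (factorialMoment_le_trace_hybridWalk_pow hp _ _).trans htraces.1⟩
    rw [sub_le_iff_le_add, div_le_iff₀' hCpos]
    exact htraces.2.trans (mul_le_mul_of_nonneg_left (trace_hybridWalk_pow_le hp hdiag m) hCpos.le)
  exact tendsto_of_tendsto_of_tendsto_of_le_of_le' hlower hupper (hcompare.mono fun _ h => h.1)
    (hcompare.mono fun _ h => h.2)

lemma tendsto_sum_card_fixed_eq (hp : ∀ᶠ n in l, p n ∈ stdSimplex ℝ (V n))
    (hη : ∀ᶠ n in l, 0 < η n) (hη0 : Tendsto η l (𝓝 0)) (hpη : ∀ᶠ n in l, ∀ v, p n v ≤ η n ^ 2)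
    (hKη : Tendsto (fun n => K n * η n ^ 3) l (𝓝 0))
    (htrace : Tendsto (fun n => (transpositionWalk (p n) (V n) ^ K n).trace) l (𝓝 L))
    (hdiag : ∀ᶠ n in l, ∀ v, (transpositionWalk (p n) (V n) ^ K n) v v ≤ M n)
    (hM : Tendsto M l (𝓝 0)) (k : ℕ) :
    Tendsto (fun n => ∑ π : Perm (V n) with #{i | π i = i} = k,
      (transpositionWalk (p n) (Perm (V n)) ^ K n) 1 π) l (𝓝 (Real.exp (-L) * L ^ k / k !)) :=
  tendsto_sum_filter_eq_of_tendsto_descFactorial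
    (hp.mono fun n hp π => (pow_mem (transpositionWalk_mem_rowStochastic hp) (K n)).1 1 π)
    (tendsto_factorialMoment hp hη hη0 hpη hKη htrace hdiag hM) k

end FactorialMomentLimit

section BiasedShuffle

open Equiv Finset Matrix

variable {V : Type*} [DecidableEq V]

lemma swap_eq_swap_iff {i j k l : V} (hij : i ≠ j) :
    swap k l = swap i j ↔ (k = i ∧ l = j) ∨ (k = j ∧ l = i) := by
  constructor
  · intro h
    have hi := Equiv.congr_fun h i
    have hj := Equiv.congr_fun h j
    simp only [swap_apply_def] at hi hj
    grind
  · rintro (⟨rfl, rfl⟩ | ⟨rfl, rfl⟩)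
    · rfl
    · exact swap_comm _ _

variable [Fintype V]

lemma transpositionWalk_perm_self (p : V → ℝ) (x : Perm V) :
    transpositionWalk p (Perm V) x x = ∑ i, p i ^ 2 := by
  simp [transpositionWalk, swap_eq_one_iff, sq]

lemma transpositionWalk_perm_swap_mul (p : V → ℝ) (x : Perm V) {i j : V} (hij : i ≠ j) :
    transpositionWalk p (Perm V) x (swap i j * x) = 2 * p i * p j := by
  have hpairs : ({q | swap q.1 q.2 • x = swap i j * x} : Finset (V × V)) = {(i, j), (j, i)} := by
    ext q
    simp [swap_eq_swap_iff hij, Prod.ext_iff]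
  rw [transpositionWalk, ← Fintype.sum_prod_type', ← sum_filter, hpairs,
    sum_pair fun h => hij (congrArg Prod.fst h)]
  ring

lemma transpositionWalk_perm_eq_zero (p : V → ℝ) {x y : Perm V} (hxy : y ≠ x)
    (h : ∀ i j, i ≠ j → y * x⁻¹ ≠ swap i j) : transpositionWalk p (Perm V) x y = 0 := by
  refine sum_eq_zero fun i _ => sum_eq_zero fun j _ => if_neg ?_
  rintro rfl
  rcases eq_or_ne i j with rfl | hij
  · exact hxy (by rw [swap_self, smul_eq_mul]; rfl)
  · exact h i j hij (by simp)

lemma sum_ite_mem_eq_card (A : Finset V) (f g : ℝ) :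
    ∑ i, (if i ∈ A then f else g) = #A * f + #Aᶜ * g := by
  have hcompl : ({i | i ∉ A} : Finset V) = Aᶜ := by
    ext
    simp
  rw [sum_ite, filter_mem_eq_inter, univ_inter, hcompl]
  simp only [sum_const, nsmul_eq_mul]

/-- The law of each of the two independently drawn positions that a step of the biased shuffle with
parameters `a` on `A` and `b` on `Aᶜ` transposes. -/
def biasedWeight (a b : ℝ) {N : ℕ} (A : Finset (Fin N)) (i : Fin N) : ℝ :=
  (if i ∈ A then a else b) / N

lemma transMat_eq_transpositionWalk (a b : ℝ) {N : ℕ} (A : Finset (Fin N)) :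
    transMat a b A = transpositionWalk (biasedWeight a b A) (Perm (Fin N)) := by
  ext x y
  have hswap {i j : Fin N} (hij : i ≠ j) (h : y * x⁻¹ = swap i j) :
      transpositionWalk (biasedWeight a b A) (Perm (Fin N)) x y =
        2 * biasedWeight a b A i * biasedWeight a b A j := by
    rw [mul_inv_eq_iff_eq_mul.mp h, transpositionWalk_perm_swap_mul _ x hij]
  rw [transMat]
  split_ifs with hxy hAA hBB hAB
  · have hsq (i : Fin N) : biasedWeight a b A i ^ 2 = (if i ∈ A then a ^ 2 else b ^ 2) / N ^ 2 := by
      rw [biasedWeight, div_pow, ite_pow]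
    simp only [hxy, transpositionWalk_perm_self, hsq, ← sum_div, sum_ite_mem_eq_card]
    ring
  · obtain ⟨i, j, hij, hi, hj, h⟩ := hAA
    rw [hswap hij h, biasedWeight, biasedWeight, if_pos hi, if_pos hj]
    ring
  · obtain ⟨i, j, hij, hi, hj, h⟩ := hBB
    rw [hswap hij h, biasedWeight, biasedWeight, if_neg hi, if_neg hj]
    ring
  · obtain ⟨i, j, hi, hj, h⟩ := hAB
    rw [hswap (ne_of_mem_of_not_mem hi hj) h, biasedWeight, biasedWeight, if_pos hi, if_neg hj]
    ring
  · refine (transpositionWalk_perm_eq_zero _ hxy fun i j hij h => ?_).symm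
    by_cases hi : i ∈ A <;> by_cases hj : j ∈ A
    · exact hAA ⟨i, j, hij, hi, hj, h⟩
    · exact hAB ⟨i, j, hi, hj, h⟩
    · exact hAB ⟨j, i, hj, hi, h.trans (swap_comm i j)⟩
    · exact hBB ⟨i, j, hij, hi, hj, h⟩

end BiasedShuffle

section OneCardWalk

open Finset Matrix

variable {n : ℕ} {A : Finset (Fin (2 * n))} {a b : ℝ}

lemma sum_ite_mem_half (hA : #A = n) (f g : ℝ) :
    ∑ i, (if i ∈ A then f else g) = n * f + n * g := by
  have hcard : #Aᶜ = n := by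
    rw [card_compl, hA, Fintype.card_fin]
    lia
  rw [sum_ite_mem_eq_card, hA, hcard]

lemma sum_biasedWeight (hn : n ≠ 0) (hA : #A = n) (hab : a + b = 2) :
    ∑ i, biasedWeight a b A i = 1 := by
  simp only [biasedWeight, ← sum_div, sum_ite_mem_half hA]
  push_cast
  field_simp
  linarith

lemma biasedWeight_mem_stdSimplex (ha : 0 ≤ a) (hb : 0 ≤ b) (hab : a + b = 2) (hn : n ≠ 0)
    (hA : #A = n) : biasedWeight a b A ∈ stdSimplex ℝ (Fin (2 * n)) := by
  refine ⟨fun i => ?_, sum_biasedWeight hn hA hab⟩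
  rw [biasedWeight]
  split_ifs <;> positivity

lemma two_mul_biasedWeight (i : Fin (2 * n)) :
    2 * biasedWeight a b A i = (if i ∈ A then a else b) / n := by
  rw [biasedWeight, ← mul_div_assoc]
  push_cast
  exact mul_div_mul_left _ _ two_ne_zero

lemma biasedWeight_le (hba : b ≤ a) (hb : 0 ≤ b) (hab : a + b = 2) (i : Fin (2 * n)) :
    biasedWeight a b A i ≤ 1 / n := by
  have hle : 2 * biasedWeight a b A i ≤ 2 / n := by
    rw [two_mul_biasedWeight]
    gcongr
    split_ifs <;> linarith
  linarith [mul_one_div (2 : ℝ) n]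

/-- `1` on `A` and `-1` on its complement. The eigenvector of the one-card walk for the exchange of
mass between the two halves. -/
def halfSign (A : Finset (Fin (2 * n))) (x : Fin (2 * n)) : ℝ := if x ∈ A then 1 else -1

lemma halfSign_mul_self (A : Finset (Fin (2 * n))) (x : Fin (2 * n)) :
    halfSign A x * halfSign A x = 1 := by
  rw [halfSign]
  split_ifs <;> norm_num

/-- The closed form of the `K`-step one-card walk. Besides `1` and `halfSign A`, its eigenvectors
are the functions that sum to zero on one half and vanish on the other. -/
def oneCardKernel (a b : ℝ) (A : Finset (Fin (2 * n))) (K : ℕ) (x y : Fin (2 * n)) : ℝ :=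
  (1 - 2 * biasedWeight a b A x) ^ K *
      ((if x = y then 1 else 0) - (1 + halfSign A x * halfSign A y) / (2 * n)) +
    (1 + (1 - a * b / n) ^ K * (halfSign A x * halfSign A y)) / (2 * n)

lemma sum_biasedWeight_mul_one_add_halfSign (hn : n ≠ 0) (hA : #A = n) (hab : a + b = 2) (r : ℝ)
    (y : Fin (2 * n)) :
    ∑ z, biasedWeight a b A z * (1 + r * (halfSign A z * halfSign A y)) =
      1 + (a - b) / 2 * r * halfSign A y := by
  have hterm (z : Fin (2 * n)) : biasedWeight a b A z * (1 + r * (halfSign A z * halfSign A y)) =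
      if z ∈ A then a / (2 * n) * (1 + r * halfSign A y)
        else b / (2 * n) * (1 - r * halfSign A y) := by
    simp only [biasedWeight, halfSign]
    push_cast
    split_ifs <;> ring
  simp only [hterm, sum_ite_mem_half hA]
  field_simp
  linear_combination hab

lemma sum_biasedWeight_comp_mul_one_add_halfSign (hA : #A = n) (f : ℝ → ℝ) (y : Fin (2 * n)) :
    ∑ z, f (biasedWeight a b A z) * (1 + halfSign A z * halfSign A y) =
      2 * n * f (biasedWeight a b A y) := by
  have hterm (z : Fin (2 * n)) : f (biasedWeight a b A z) * (1 + halfSign A z * halfSign A y) =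
      if z ∈ A then f (a / (2 * n : ℕ)) * (1 + halfSign A y)
        else f (b / (2 * n : ℕ)) * (1 - halfSign A y) := by
    simp only [biasedWeight, halfSign]
    split_ifs <;> ring
  simp only [hterm, sum_ite_mem_half hA]
  rw [biasedWeight, halfSign]
  split_ifs <;> ring

lemma sum_biasedWeight_mul_oneCardKernel (hn : n ≠ 0) (hA : #A = n) (hab : a + b = 2) (K : ℕ)
    (y : Fin (2 * n)) :
    ∑ z, biasedWeight a b A z * oneCardKernel a b A K z y =
      (1 + (a - b) / 2 * (1 - a * b / n) ^ K * halfSign A y) / (2 * n) := by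
  let f (t : ℝ) : ℝ := t * (1 - 2 * t) ^ K
  have hsplit (z : Fin (2 * n)) : biasedWeight a b A z * oneCardKernel a b A K z y =
      (if z = y then f (biasedWeight a b A z) else 0) -
        f (biasedWeight a b A z) * (1 + halfSign A z * halfSign A y) / (2 * n) +
        biasedWeight a b A z *
          (1 + (1 - a * b / n) ^ K * (halfSign A z * halfSign A y)) / (2 * n) := by
    rw [oneCardKernel]
    split_ifs <;> ring
  simp only [hsplit, sum_add_distrib, sum_sub_distrib, sum_ite_eq', mem_univ, if_true, ← sum_div,
    sum_biasedWeight_mul_one_add_halfSign hn hA hab,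
    sum_biasedWeight_comp_mul_one_add_halfSign hA f]
  rw [mul_div_cancel_left₀ _ (by positivity), sub_self, zero_add]

lemma halfSign_mul_biasedWeight (hn : n ≠ 0) (hab : a + b = 2) (x : Fin (2 * n)) :
    (1 - 2 * biasedWeight a b A x) * halfSign A x + (a - b) * biasedWeight a b A x =
      (1 - a * b / n) * halfSign A x := by
  obtain rfl : b = 2 - a := by linarith
  simp only [biasedWeight, halfSign]
  push_cast
  split_ifs <;> · field_simp; ring

lemma transpositionWalk_biasedWeight_pow_apply (hn : n ≠ 0) (hA : #A = n) (hab : a + b = 2) (K : ℕ)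
    (x y : Fin (2 * n)) :
    (transpositionWalk (biasedWeight a b A) (Fin (2 * n)) ^ K) x y = oneCardKernel a b A K x y := by
  induction K generalizing x with
  | zero =>
    simp only [oneCardKernel, pow_zero, one_apply, one_mul]
    ring
  | succ K ih =>
    have hsum := sum_biasedWeight hn hA hab
    simp only [pow_succ', mul_apply, ih, transpositionWalk_self_apply hsum, add_mul, ite_mul,
      zero_mul, sum_add_distrib, sum_ite_eq, mem_univ, if_true, mul_assoc, ← mul_sum,
      sum_biasedWeight_mul_oneCardKernel hn hA hab]
    rw [oneCardKernel, oneCardKernel, pow_succ, pow_succ]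
    linear_combination (1 - a * b / n) ^ K * halfSign A y / (2 * n) *
      halfSign_mul_biasedWeight hn hab x

lemma transpositionWalk_biasedWeight_pow_self (hn : n ≠ 0) (hA : #A = n) (hab : a + b = 2) (K : ℕ)
    (x : Fin (2 * n)) :
    (transpositionWalk (biasedWeight a b A) (Fin (2 * n)) ^ K) x x =
      (1 - (if x ∈ A then a else b) / n) ^ K * (1 - 1 / n) +
        (1 + (1 - a * b / n) ^ K) / (2 * n) := by
  rw [transpositionWalk_biasedWeight_pow_apply hn hA hab, oneCardKernel, halfSign_mul_self,
    two_mul_biasedWeight, if_pos rfl]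
  ring

lemma trace_transpositionWalk_biasedWeight_pow (hn : n ≠ 0) (hA : #A = n) (hab : a + b = 2)
    (K : ℕ) :
    (transpositionWalk (biasedWeight a b A) (Fin (2 * n)) ^ K).trace =
      (n - 1) * ((1 - a / n) ^ K + (1 - b / n) ^ K) + 1 + (1 - a * b / n) ^ K := by
  have hite (x : Fin (2 * n)) : (1 - (if x ∈ A then a else b) / n) ^ K =
      if x ∈ A then (1 - a / n : ℝ) ^ K else (1 - b / n) ^ K := by split_ifs <;> rfl
  simp only [trace, diag_apply, transpositionWalk_biasedWeight_pow_self hn hA hab, hite,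
    sum_add_distrib, ← sum_mul, sum_ite_mem_half hA, sum_const, card_univ, Fintype.card_fin,
    nsmul_eq_mul]
  push_cast
  field_simp
  ring

lemma transpositionWalk_biasedWeight_pow_self_le (hA : #A = n) (hb : 0 ≤ b) (hba : b ≤ a)
    (hab : a + b = 2) (han : a ≤ n) (K : ℕ) (x : Fin (2 * n)) :
    (transpositionWalk (biasedWeight a b A) (Fin (2 * n)) ^ K) x x ≤ (1 - b / n) ^ K + 1 / n := by
  have ha : 0 ≤ a := hb.trans hba
  have hn : (1 : ℝ) ≤ n := by linarith
  have hweight : (if x ∈ A then a else b) ∈ Set.Icc b a := by split_ifs <;> simp [hba]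
  have hγ : (1 - a * b / n) ^ K ≤ 1 := by
    refine pow_le_one₀ (sub_nonneg.mpr (div_le_one_of_le₀ ?_ (by positivity)))
      (sub_le_self _ (by positivity))
    nlinarith [sq_nonneg (a - b)]
  rw [transpositionWalk_biasedWeight_pow_self (by rintro rfl; norm_num at hn) hA hab]
  have hbase : 0 ≤ 1 - (if x ∈ A then a else b) / (n : ℝ) :=
    sub_nonneg.mpr (div_le_one_of_le₀ (hweight.2.trans han) (by positivity))
  gcongr ?_ + ?_
  · refine (mul_le_of_le_one_right (by positivity) (sub_le_self _ (by positivity))).trans ?_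
    gcongr
    exact hweight.1
  · rw [div_le_div_iff₀ (by positivity) (by positivity)]
    nlinarith

end OneCardWalk

section Cutoff

open Filter Topology

variable {b : ℝ}

lemma tendsto_one_sub_pow_mul_exp {α : Type*} {l : Filter α} {x : α → ℝ} {K : α → ℕ}
    (hx : Tendsto x l (𝓝 0)) (hKx : Tendsto (fun n => K n * x n ^ 2) l (𝓝 0)) :
    Tendsto (fun n => (1 - x n) ^ K n * Real.exp (K n * x n)) l (𝓝 1) := by
  have hsmall : ∀ᶠ n in l, |x n| < 1 / 2 := by
    have h := hx.abs
    rw [abs_zero] at h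
    exact h.eventually_lt_const (by norm_num)
  have hlog : Tendsto (fun n => K n * (Real.log (1 - x n) + x n)) l (𝓝 0) := by
    refine squeeze_zero_norm' ?_ (by simpa using hKx.const_mul 2)
    filter_upwards [hsmall] with n hn
    have h := Real.abs_log_sub_add_sum_range_le (hn.trans (by norm_num)) 1
    simp only [Finset.sum_range_one, zero_add, pow_one, Nat.cast_zero, div_one] at h
    rw [Real.norm_eq_abs, abs_mul, Nat.abs_cast, mul_left_comm]
    gcongr
    rw [add_comm]
    refine h.trans ((div_le_iff₀ (by linarith)).mpr ?_)
    rw [one_add_one_eq_two, sq_abs]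
    nlinarith [sq_nonneg (x n)]
  refine (Real.exp_zero ▸ hlog.rexp).congr' ?_
  filter_upwards [hsmall] with n hn
  have hpos : 0 < 1 - x n := by linarith [le_abs_self (x n)]
  rw [mul_add, Real.exp_add, Real.exp_nat_mul, Real.exp_log hpos]

/-- The number of steps `K_N` in the theorem, with `N = 2n` (and `0` while `log N < c`). -/
def cutoffSteps (b c : ℝ) (n : ℕ) : ℕ := ⌊((2 * n : ℝ) / (2 * b)) * (Real.log (2 * n) - c)⌋₊

lemma tendsto_two_mul_natCast_atTop : Tendsto (fun n : ℕ => 2 * (n : ℝ)) atTop atTop :=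
  tendsto_natCast_atTop_atTop.const_mul_atTop two_pos

lemma eventually_abs_sub_cutoffSteps_le (hb : 0 < b) (c : ℝ) :
    ∀ᶠ n : ℕ in atTop,
      |(n : ℝ) / b * (Real.log (2 * n) - c) - cutoffSteps b c n| ≤ 1 := by
  filter_upwards [(Real.tendsto_log_atTop.comp tendsto_two_mul_natCast_atTop).eventually_ge_atTop c]
    with n hn
  rw [← mul_div_mul_left (n : ℝ) b two_ne_zero]
  exact Nat.abs_sub_floor_le (mul_nonneg (by positivity) (sub_nonneg.mpr hn))

lemma tendsto_log_sub_cutoffSteps_mul (hb : 0 < b) (c s : ℝ) :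
    Tendsto (fun n : ℕ => s / b * Real.log (2 * n) - cutoffSteps b c n * (s / n)) atTop
      (𝓝 (s / b * c)) := by
  have hrounding : Tendsto (fun n : ℕ =>
      ((n : ℝ) / b * (Real.log (2 * n) - c) - cutoffSteps b c n) * (s / n)) atTop (𝓝 0) := by
    refine squeeze_zero_norm' ?_ (tendsto_const_div_atTop_nhds_zero_nat |s|)
    filter_upwards [eventually_abs_sub_cutoffSteps_le hb c] with n hn
    rw [norm_mul, norm_div, Real.norm_natCast]
    exact mul_le_of_le_one_left (by positivity) hn
  refine (add_zero (s / b * c) ▸ hrounding.const_add (s / b * c)).congr' ?_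
  filter_upwards [eventually_ne_atTop 0] with n hn
  field_simp
  ring

lemma tendsto_cutoffSteps_div_rpow (hb : 0 < b) (c : ℝ) {r : ℝ} (hr : 1 < r) :
    Tendsto (fun n : ℕ => cutoffSteps b c n / (n : ℝ) ^ r) atTop (𝓝 0) := by
  have hr' : 0 < r - 1 := sub_pos.mpr hr
  have hlog := ((isLittleO_log_rpow_atTop hr').tendsto_div_nhds_zero.comp
    tendsto_two_mul_natCast_atTop).const_mul (1 / b * 2 ^ (r - 1))
  have hdiff := (tendsto_log_sub_cutoffSteps_mul hb c 1).mul
    ((tendsto_rpow_neg_atTop hr').comp tendsto_natCast_atTop_atTop)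
  rw [mul_zero] at hlog hdiff
  refine (sub_zero (0 : ℝ) ▸ hlog.sub hdiff).congr' ?_
  filter_upwards [eventually_gt_atTop 0] with n hn
  have hn' : (0 : ℝ) < n := Nat.cast_pos.mpr hn
  rw [Function.comp_apply, Function.comp_apply, Real.mul_rpow zero_le_two hn'.le,
    Real.rpow_neg hn'.le, Real.rpow_sub_one hn'.ne']
  field_simp
  ring

lemma tendsto_one_div_sqrt_natCast : Tendsto (fun n : ℕ => 1 / √(n : ℝ)) atTop (𝓝 0) :=
  (Real.tendsto_sqrt_atTop.comp tendsto_natCast_atTop_atTop).const_div_atTop 1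

lemma tendsto_cutoffSteps_mul_one_div_sqrt_pow_three (hb : 0 < b) (c : ℝ) :
    Tendsto (fun n : ℕ => cutoffSteps b c n * (1 / √(n : ℝ)) ^ 3) atTop (𝓝 0) := by
  refine (tendsto_cutoffSteps_div_rpow hb c (r := 3 / 2) (by norm_num)).congr fun n => ?_
  rw [one_div_pow, mul_one_div, Real.rpow_div_two_eq_sqrt _ n.cast_nonneg, Real.rpow_ofNat]

lemma tendsto_rpow_mul_one_sub_div_pow_cutoffSteps (hb : 0 < b) (c s : ℝ) :
    Tendsto (fun n : ℕ => (2 * n : ℝ) ^ (s / b) * (1 - s / n) ^ cutoffSteps b c n) atTop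
      (𝓝 (Real.exp (s / b * c))) := by
  have hsq : Tendsto (fun n : ℕ => cutoffSteps b c n * (s / n) ^ 2) atTop (𝓝 0) := by
    have h := (tendsto_cutoffSteps_div_rpow hb c one_lt_two).const_mul (s ^ 2)
    rw [mul_zero] at h
    refine h.congr fun n => ?_
    rw [Real.rpow_two]
    ring
  have h := (tendsto_log_sub_cutoffSteps_mul hb c s).rexp.mul
    (tendsto_one_sub_pow_mul_exp (tendsto_const_div_atTop_nhds_zero_nat s) hsq)
  rw [mul_one] at h
  refine h.congr' ?_
  filter_upwards [eventually_gt_atTop 0] with n hn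
  rw [Real.rpow_def_of_pos (by positivity), mul_comm (Real.log _), Real.exp_sub]
  field_simp

lemma tendsto_rpow_mul_one_sub_div_pow_cutoffSteps_zero (hb : 0 < b) (c : ℝ) {r s : ℝ}
    (hrs : r < s / b) :
    Tendsto (fun n : ℕ => (2 * n : ℝ) ^ r * (1 - s / n) ^ cutoffSteps b c n) atTop (𝓝 0) := by
  have h := ((tendsto_rpow_neg_atTop (sub_pos.mpr hrs)).comp tendsto_two_mul_natCast_atTop).mul
    (tendsto_rpow_mul_one_sub_div_pow_cutoffSteps hb c s)
  rw [zero_mul] at h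
  refine h.congr' ?_
  filter_upwards [eventually_gt_atTop 0] with n hn
  rw [Function.comp_apply, ← mul_assoc, ← Real.rpow_add (by positivity)]
  ring_nf

lemma tendsto_one_sub_div_pow_cutoffSteps_zero (hb : 0 < b) (c : ℝ) {s : ℝ} (hs : 0 < s) :
    Tendsto (fun n : ℕ => (1 - s / n) ^ cutoffSteps b c n) atTop (𝓝 0) := by
  simpa using tendsto_rpow_mul_one_sub_div_pow_cutoffSteps_zero hb c (div_pos hs hb)

lemma tendsto_oneCardTrace_cutoffSteps {a : ℝ} (hb : 0 < b) (hba : b < a) (c : ℝ) :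
    Tendsto (fun n : ℕ => ((n : ℝ) - 1) * ((1 - a / n) ^ cutoffSteps b c n +
        (1 - b / n) ^ cutoffSteps b c n) + 1 + (1 - a * b / n) ^ cutoffSteps b c n)
      atTop (𝓝 (1 + Real.exp c / 2)) := by
  have ha : 0 < a := hb.trans hba
  have hα : Tendsto (fun n : ℕ => 2 * (n : ℝ) * (1 - a / n) ^ cutoffSteps b c n) atTop (𝓝 0) := by
    simpa using tendsto_rpow_mul_one_sub_div_pow_cutoffSteps_zero hb c ((one_lt_div hb).mpr hba)
  have hβ : Tendsto (fun n : ℕ => 2 * (n : ℝ) * (1 - b / n) ^ cutoffSteps b c n) atTop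
      (𝓝 (Real.exp c)) := by
    simpa [hb.ne'] using tendsto_rpow_mul_one_sub_div_pow_cutoffSteps hb c b
  have hα' := tendsto_one_sub_div_pow_cutoffSteps_zero hb c ha
  have hβ' := tendsto_one_sub_div_pow_cutoffSteps_zero hb c hb
  have hγ := tendsto_one_sub_div_pow_cutoffSteps_zero hb c (mul_pos ha hb)
  have h := ((((hα.add hβ).div_const 2).sub (hα'.add hβ')).add_const 1).add hγ
  simp only [zero_add, add_zero, sub_zero] at h
  refine (add_comm 1 (Real.exp c / 2) ▸ h).congr fun n => ?_
  ring

end Cutoff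

/-- Suppose `b < a`. Fix `c ∈ ℝ` and let `Fix_c` be the number of fixed
points after `K_N = ⌊(N/(2b))(log N − c)⌋` steps of the bRT shuffle started at the
identity, `N = 2n`. Then for every `k`, `ℙ(Fix_c = k) → e^{−(1+e^c/2)} (1+e^c/2)^k / k!`
as `N → ∞`. -/
theorem brt_fixed_points_poisson (a b : ℝ) (hb : 0 < b) (hba : b < a) (hab : a + b = 2)
    (c : ℝ) (A : (n : ℕ) → Finset (Fin (2 * n))) (hA : ∀ n, (A n).card = n) (k : ℕ) :
    Filter.Tendsto
      (fun n : ℕ =>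
        ∑ π ∈ Finset.univ.filter (fun π : Equiv.Perm (Fin (2 * n)) =>
            (Finset.univ.filter fun i => π i = i).card = k),
          (transMat a b (A n) ^
            ⌊((2 * n : ℝ) / (2 * b)) * (Real.log (2 * n) - c)⌋₊) 1 π)
      Filter.atTop
      (nhds (Real.exp (-(1 + Real.exp c / 2)) * (1 + Real.exp c / 2) ^ k /
        (k.factorial : ℝ))) := by
  simp only [transMat_eq_transpositionWalk]
  have hlarge : ∀ᶠ n : ℕ in Filter.atTop, n ≠ 0 ∧ a ≤ n :=
    (Filter.eventually_ne_atTop 0).and (tendsto_natCast_atTop_atTop.eventually_ge_atTop a)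
  have hη (n : ℕ) : (1 / √n : ℝ) ^ 2 = 1 / n := by rw [one_div_pow, Real.sq_sqrt n.cast_nonneg]
  refine tendsto_sum_card_fixed_eq (K := cutoffSteps b c) (η := fun n => 1 / √n)
    (M := fun n => (1 - b / n) ^ cutoffSteps b c n + 1 / n) ?_ ?_ ?_ ?_ ?_ ?_ ?_ ?_ k
  · filter_upwards [hlarge] with n hn
    exact biasedWeight_mem_stdSimplex (hb.trans hba).le hb.le hab hn.1 (hA n)
  · filter_upwards [hlarge] with n hn
    exact one_div_pos.mpr (Real.sqrt_pos.mpr (Nat.cast_pos.mpr (Nat.pos_of_ne_zero hn.1)))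
  · exact tendsto_one_div_sqrt_natCast
  · exact .of_forall fun n i => (biasedWeight_le hba.le hb.le hab i).trans (hη n).ge
  · exact tendsto_cutoffSteps_mul_one_div_sqrt_pow_three hb c
  · refine (tendsto_oneCardTrace_cutoffSteps hb hba c).congr' ?_
    filter_upwards [hlarge] with n hn
    exact (trace_transpositionWalk_biasedWeight_pow hn.1 (hA n) hab _).symm
  · filter_upwards [hlarge] with n hn
    exact transpositionWalk_biasedWeight_pow_self_le (hA n) hb.le hba.le hab hn.2 _
  · simpa using (tendsto_one_sub_div_pow_cutoffSteps_zero hb c hb).add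
      tendsto_one_div_atTop_nhds_zero_nat

end BRT
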